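/- arXiv:1301.0379 — 6 statements merged into one kernel-verified Lean document; each statement's English description precedes it below -/
import Mathlib

section
/- If G is a subgroup of the symmetric group Sym(Ω) on a finite set Ω with |Ω| ≥ 2, and G acts transitively on Ω, then G contains a fixed point free element, i.e., there exists g ∈ G such that g(i) ≠ i for every i ∈ Ω. (Jordan's theorem) -/
/-- Jordan's theorem: a transitive permutation group on a finite set of size
at least 2 contains a fixed point free element. -/
theorem jordan_fixed_point_free {Ω : Type*} [Fintype Ω]
    (G : Subgroup (Equiv.Perm Ω)) (hΩ : 2 ≤ Fintype.card Ω)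
    (htrans : ∀ x y : Ω, ∃ g ∈ G, g x = y) :
    ∃ g ∈ G, ∀ i : Ω, g i ≠ i := by
  classical
  by_contra hcon
  push Not at hcon
  have hB := MulAction.sum_card_fixedBy_eq_card_orbits_mul_card_group G Ω
  have hsub : Subsingleton (Quotient (MulAction.orbitRel G Ω)) := by
    constructor
    intro a b
    induction a using Quotient.inductionOn with | _ a =>
    induction b using Quotient.inductionOn with | _ b =>
    apply Quotient.sound
    obtain ⟨g, hg, h⟩ := htrans b a
    exact ⟨⟨g, hg⟩, h⟩
  have h1 : Fintype.card (Quotient (MulAction.orbitRel G Ω)) ≤ 1 :=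
    Fintype.card_le_one_iff_subsingleton.mpr hsub
  have hlt : ∑ _g : G, 1 < ∑ g : G, Fintype.card (MulAction.fixedBy Ω g) := by
    apply Finset.sum_lt_sum
    · intro g _
      obtain ⟨i, hi⟩ := hcon g g.2
      exact Fintype.card_pos_iff.mpr ⟨⟨i, hi⟩⟩
    · refine ⟨1, Finset.mem_univ _, ?_⟩
      have : Fintype.card (MulAction.fixedBy Ω (1 : G)) = Fintype.card Ω :=
        Fintype.card_congr (Equiv.subtypeUnivEquiv (fun x => one_smul G x))
      omega
  rw [hB] at hlt
  simp only [Finset.sum_const, Finset.card_univ, smul_eq_mul, mul_one] at hlt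
  have := Nat.mul_le_mul_right (Fintype.card G) h1
  omega
end

section
/- If G is a subgroup of Sym(Ω) acting transitively on a finite set Ω with |Ω| = n ≥ 2, then the number of fixed point free elements of G is at least |G|/n; precisely, n · |{g ∈ G : g(i) ≠ i for all i ∈ Ω}| ≥ |G|. (Cameron–Cohen theorem) -/
/-- Cameron–Cohen: a transitive permutation group `G` on a finite set of size
`n ≥ 2` has at least `|G|/n` fixed point free elements. -/
theorem cameron_cohen {Ω : Type*} [Fintype Ω]
    (G : Subgroup (Equiv.Perm Ω)) (hΩ : 2 ≤ Fintype.card Ω)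
    (htrans : ∀ x y : Ω, ∃ g ∈ G, g x = y) :
    Nat.card G ≤
      Fintype.card Ω * Nat.card {g : Equiv.Perm Ω | g ∈ G ∧ ∀ i : Ω, g i ≠ i} := by
  classical
  have : Fintype G := Fintype.ofFinite _
  obtain ⟨a, b, hab⟩ := Fintype.one_lt_card_iff.mp hΩ
  have : Fintype (Quotient (MulAction.orbitRel G Ω)) := Fintype.ofFinite _
  have : Fintype (Quotient (MulAction.orbitRel G (Ω × Ω))) := Fintype.ofFinite _
  have h1 := MulAction.sum_card_fixedBy_eq_card_orbits_mul_card_group G Ω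
  have h2 := MulAction.sum_card_fixedBy_eq_card_orbits_mul_card_group G (Ω × Ω)
  have c1 : Fintype.card (Quotient (MulAction.orbitRel G Ω)) = 1 := by
    rw [Fintype.card_eq_one_iff]
    refine ⟨Quotient.mk _ a, fun y => ?_⟩
    induction y using Quotient.inductionOn with
    | h y =>
      obtain ⟨g, hg, h⟩ := htrans a y
      exact Quotient.sound ⟨⟨g, hg⟩, h⟩
  have c2 : 2 ≤ Fintype.card (Quotient (MulAction.orbitRel G (Ω × Ω))) := by
    refine Fintype.one_lt_card_iff.mpr ⟨Quotient.mk _ (a, a), Quotient.mk _ (a, b), fun h => ?_⟩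
    obtain ⟨g, hg⟩ := Quotient.exact h
    have e1 := congrArg Prod.fst hg
    have e2 := congrArg Prod.snd hg
    exact hab (g.1.injective (e1.trans e2.symm))
  have hsq : ∀ g : G, Fintype.card (MulAction.fixedBy (Ω × Ω) g)
      = Fintype.card (MulAction.fixedBy Ω g) * Fintype.card (MulAction.fixedBy Ω g) := by
    intro g
    rw [← Fintype.card_prod]
    refine Fintype.card_congr ((Equiv.setCongr ?_).trans
      (Equiv.Set.prod (MulAction.fixedBy Ω g) (MulAction.fixedBy Ω g)))
    ext ⟨x, y⟩
    simp [MulAction.mem_fixedBy, Prod.ext_iff]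
  have hF : Nat.card {g : Equiv.Perm Ω | g ∈ G ∧ ∀ i : Ω, g i ≠ i}
      = ∑ g : G, if Fintype.card (MulAction.fixedBy Ω g) = 0 then 1 else 0 := by
    rw [← Finset.card_filter, ← Fintype.card_subtype, ← Nat.card_eq_fintype_card]
    refine Nat.card_congr ((Equiv.subtypeSubtypeEquivSubtypeInter (· ∈ G)
      (fun g : Equiv.Perm Ω => ∀ i, g i ≠ i)).symm.trans (Equiv.subtypeEquivRight ?_))
    intro g
    rw [Fintype.card_eq_zero_iff, isEmpty_subtype]
    rfl
  simp only [hsq] at h2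
  rw [c1, one_mul] at h1
  rw [hF, Nat.card_eq_fintype_card]
  set n := Fintype.card Ω
  have key : ∀ g : G, ((Fintype.card (MulAction.fixedBy Ω g) : ℤ) *
      (Fintype.card (MulAction.fixedBy Ω g) : ℤ)) - (n + 1) * Fintype.card (MulAction.fixedBy Ω g) + n
      ≤ n * ((if Fintype.card (MulAction.fixedBy Ω g) = 0 then 1 else 0 : ℕ) : ℤ) := by
    intro g
    have hle : Fintype.card (MulAction.fixedBy Ω g) ≤ n := Fintype.card_subtype_le _
    generalize Fintype.card (MulAction.fixedBy Ω g) = f at *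
    split_ifs with h
    · simp [h]
    · have : 1 ≤ f := Nat.one_le_iff_ne_zero.mpr h
      zify at this hle
      push_cast
      nlinarith
  have s := Finset.sum_le_sum (fun g (_ : g ∈ Finset.univ) => key g)
  rw [Finset.sum_add_distrib, Finset.sum_sub_distrib, ← Finset.mul_sum, ← Finset.mul_sum] at s
  simp only [Finset.sum_const, Finset.card_univ, nsmul_eq_mul] at s
  have h3 := (Nat.mul_le_mul_right (Fintype.card G) c2).trans h2.ge
  zify at h1 h3
  refine (Nat.cast_le (α := ℤ)).mp ?_
  rw [h1] at s
  push_cast at s h3 ⊢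
  linarith
end

section
/- Let G ≤ Sym(Ω) act transitively on a finite set Ω with |Ω| = n ≥ 2, let α ∈ Ω, let G_α be the stabilizer of α in G, and let orb(G_α) denote the number of orbits of G_α on Ω. Then the number of fixed point free elements of G is at least (orb(G_α) − 1) · |G_α|, which equals (orb(G_α) − 1) · |G|/n. -/
open Classical in
/-- number of fixed points -/
noncomputable def fixCount {Ω : Type*} [Fintype Ω] (g : Equiv.Perm Ω) : ℕ :=
  (Finset.univ.filter (fun x : Ω => g x = x)).card

open Classical in
theorem fixCount_conj {Ω : Type*} [Fintype Ω] (g k : Equiv.Perm Ω) :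
    fixCount (k * g * k⁻¹) = fixCount g := by
  unfold fixCount
  symm
  refine Finset.card_bij' (fun x _ => k x) (fun x _ => k⁻¹ x) ?_ ?_ ?_ ?_
  · intro x hx
    have hx' : g x = x := (Finset.mem_filter.mp hx).2
    refine Finset.mem_filter.mpr ⟨Finset.mem_univ _, ?_⟩
    simp [hx']
  · intro x hx
    have hx' : k (g (k⁻¹ x)) = x := (Finset.mem_filter.mp hx).2
    refine Finset.mem_filter.mpr ⟨Finset.mem_univ _, ?_⟩
    rw [Equiv.Perm.eq_inv_iff_eq]
    exact hx'
  · intro x _; simp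
  · intro x _; simp

open Classical in
theorem sum_weight {Ω : Type*} [Fintype Ω] (G : Subgroup (Equiv.Perm Ω))
    (htrans : ∀ x y : Ω, ∃ g ∈ G, g x = y) (α : Ω) (w : Equiv.Perm Ω → ℕ)
    (hw : ∀ g k, w (k * g * k⁻¹) = w g) :
    ∑ g : G, w g * fixCount (g : Equiv.Perm Ω) =
      Fintype.card Ω * ∑ g : G, if (g : Equiv.Perm Ω) α = α then w g else 0 := by
  have h1 : ∀ g : G, w g * fixCount (g : Equiv.Perm Ω) =
      ∑ x : Ω, if (g : Equiv.Perm Ω) x = x then w g else 0 := by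
    intro g
    rw [← Finset.sum_filter, Finset.sum_const, fixCount, smul_eq_mul, mul_comm]
  simp_rw [h1]
  rw [Finset.sum_comm]
  have h2 : ∀ x : Ω, (∑ g : G, if (g : Equiv.Perm Ω) x = x then w g else 0) =
      ∑ g : G, if (g : Equiv.Perm Ω) α = α then w g else 0 := by
    intro x
    obtain ⟨k, hk, rfl⟩ := htrans α x
    symm
    refine Fintype.sum_equiv (MulAut.conj (⟨k, hk⟩ : G)).toEquiv _ _ ?_
    intro g
    simp [hw]
  simp [h2]

open Classical in
theorem sum_stab {Ω : Type*} [Fintype Ω] (G : Subgroup (Equiv.Perm Ω)) (α : Ω)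
    (w : Equiv.Perm Ω → ℕ) :
    (∑ g : G, if (g : Equiv.Perm Ω) α = α then w g else 0) =
      ∑ h : MulAction.stabilizer G α, w (h : G) := by
  rw [← Finset.sum_filter]
  refine Finset.sum_subtype (p := fun g : G => g ∈ MulAction.stabilizer G α) _ ?_ (fun g : G => w g)
  intro g
  simp [MulAction.mem_stabilizer_iff, Subgroup.smul_def]


/-- Refined Cameron–Cohen bound: for a transitive group `G` on `n ≥ 2` points,
the number of fixed point free elements is at least `(orb(G_α) - 1) * |G_α|`,
which equals `(orb(G_α) - 1) * |G| / n`. -/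
theorem cameron_cohen_refined {Ω : Type*} [Fintype Ω]
    (G : Subgroup (Equiv.Perm Ω)) (hΩ : 2 ≤ Fintype.card Ω)
    (htrans : ∀ x y : Ω, ∃ g ∈ G, g x = y) (α : Ω) :
    (Nat.card (MulAction.orbitRel.Quotient (MulAction.stabilizer G α) Ω) - 1) *
        Nat.card (MulAction.stabilizer G α) ≤
      Nat.card {g : Equiv.Perm Ω | g ∈ G ∧ ∀ i : Ω, g i ≠ i} ∧
    (Nat.card (MulAction.orbitRel.Quotient (MulAction.stabilizer G α) Ω) - 1) *
        Nat.card (MulAction.stabilizer G α) =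
      (Nat.card (MulAction.orbitRel.Quotient (MulAction.stabilizer G α) Ω) - 1) *
        Nat.card G / Fintype.card Ω := by
  classical
  set r := Nat.card (MulAction.orbitRel.Quotient (MulAction.stabilizer G α) Ω) with hr
  set m := Nat.card (MulAction.stabilizer G α) with hm
  set n := Fintype.card Ω with hn
  have e1 : ∑ g : G, fixCount (g : Equiv.Perm Ω) = n * m := by
    have := sum_weight G htrans α (fun _ => 1) (fun _ _ => rfl)
    rw [sum_stab G α (fun _ => 1)] at this
    simpa [hm] using this
  have e2 : ∑ g : G, fixCount (g : Equiv.Perm Ω) * fixCount (g : Equiv.Perm Ω) =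
      n * (r * m) := by
    rw [sum_weight G htrans α fixCount fixCount_conj, sum_stab]
    congr 1
    rw [hr, hm, Nat.card_eq_fintype_card, Nat.card_eq_fintype_card,
      ← MulAction.sum_card_fixedBy_eq_card_orbits_mul_card_group]
    refine Finset.sum_congr rfl fun h _ => ?_
    rw [fixCount, Fintype.card_subtype]
    rfl
  have e3 : Nat.card G = n * m := by
    haveI : MulAction.IsPretransitive G Ω := ⟨fun x y => by
      obtain ⟨g, hg, h⟩ := htrans x y
      exact ⟨⟨g, hg⟩, h⟩⟩
    have h := MulAction.index_stabilizer_of_transitive G α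
    rw [← Subgroup.card_mul_index (MulAction.stabilizer G α), h, Nat.card_eq_fintype_card (α := Ω),
      mul_comm]
  have hn0 : 0 < n := by omega
  have hr1 : 1 ≤ r := by
    haveI : Nonempty (MulAction.orbitRel.Quotient (MulAction.stabilizer G α) Ω) :=
      ⟨Quotient.mk'' α⟩
    exact Nat.card_pos
  refine ⟨?_, ?_⟩
  · set f := Nat.card {g : Equiv.Perm Ω | g ∈ G ∧ ∀ i : Ω, g i ≠ i} with hf
    have e4 : f = (Finset.univ.filter (fun g : G => fixCount (g : Equiv.Perm Ω) = 0)).card := by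
      rw [← Fintype.card_subtype, ← Nat.card_eq_fintype_card]
      refine Nat.card_congr
        { toFun := fun g => ⟨⟨g.1, g.2.1⟩, ?_⟩
          invFun := fun g => ⟨g.1.1, g.1.2, ?_⟩
          left_inv := fun _ => rfl
          right_inv := fun _ => rfl }
      · have := g.2.2
        simpa [fixCount, Finset.filter_eq_empty_iff] using this
      · have := g.2
        simpa [fixCount, Finset.filter_eq_empty_iff] using this
    have e5 : ∑ g : G, (((fixCount (g : Equiv.Perm Ω) : ℤ) - 1) * (fixCount (g : Equiv.Perm Ω) - n))
        ≤ n * f := by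
      rw [e4, Finset.card_filter, Nat.cast_sum, Finset.mul_sum]
      refine Finset.sum_le_sum fun g _ => ?_
      have hle : fixCount (g : Equiv.Perm Ω) ≤ n := Finset.card_le_univ _
      split_ifs with h0
      · simp [h0]
      · have h1 : (1 : ℤ) ≤ fixCount (g : Equiv.Perm Ω) := by exact_mod_cast Nat.pos_of_ne_zero h0
        have h2 : (fixCount (g : Equiv.Perm Ω) : ℤ) ≤ n := by exact_mod_cast hle
        push_cast
        nlinarith
    have e6 : ∑ g : G, (((fixCount (g : Equiv.Perm Ω) : ℤ) - 1) * (fixCount (g : Equiv.Perm Ω) - n))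
        = n * (r * m) - (n + 1) * (n * m) + n * (n * m) := by
      have e1' : ∑ g : G, (fixCount (g : Equiv.Perm Ω) : ℤ) = n * m := by exact_mod_cast e1
      have e2' : ∑ g : G, (fixCount (g : Equiv.Perm Ω) : ℤ) * fixCount (g : Equiv.Perm Ω) =
          n * (r * m) := by exact_mod_cast e2
      have e3' : ∑ g : G, (n : ℤ) = n * (n * m) := by
        rw [Finset.sum_const, Finset.card_univ, ← Nat.card_eq_fintype_card, e3]
        push_cast [nsmul_eq_mul]
        ring
      rw [← e3', ← e2', ← e1', Finset.mul_sum, ← Finset.sum_sub_distrib, ← Finset.sum_add_distrib]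
      refine Finset.sum_congr rfl fun g _ => ?_
      ring
    rw [e6] at e5
    zify [hr1]
    have : (n : ℤ) * ((r - 1) * m) ≤ n * f := by linarith
    exact le_of_mul_le_mul_left this (by exact_mod_cast hn0)
  · rw [e3]
    symm
    apply Nat.div_eq_of_eq_mul_left hn0
    ring
end

section
/- Let G ≤ Sym(Ω) be a permutation group on a finite set Ω and let k be a natural number. If move(G) ≥ 2k, then there exists g ∈ G with move(g) ≥ k; that is, if at least 2k points of Ω are moved by some element of G, then a single element of G moves at least k points. -/
/-- If at least `2k` points of `Ω` are moved by some element of `G`, then a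
single element of `G` moves at least `k` points. -/
theorem exists_k_mover {Ω : Type*} [Fintype Ω]
    (G : Subgroup (Equiv.Perm Ω)) (k : ℕ)
    (hmove : 2 * k ≤ Nat.card {i : Ω | ∃ g ∈ G, g i ≠ i}) :
    ∃ g ∈ G, k ≤ Nat.card {i : Ω | g i ≠ i} := by
  classical
  by_contra! hcon
  let S : Finset (Equiv.Perm Ω) := Finset.univ.filter (fun g => g ∈ G)
  let M : Finset Ω := Finset.univ.filter (fun i => ∃ g ∈ G, g i ≠ i)
  have hM : 2 * k ≤ M.card := by
    have : Nat.card {i : Ω | ∃ g ∈ G, g i ≠ i} = M.card := by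
      rw [Nat.card_eq_fintype_card]
      exact Fintype.card_subtype _
    omega
  have hdc : ∑ i ∈ M, (S.filter (fun g => g i ≠ i)).card
      = ∑ g ∈ S, (M.filter (fun i => g i ≠ i)).card :=
    Finset.sum_card_bipartiteAbove_eq_sum_card_bipartiteBelow
      (fun (i : Ω) (g : Equiv.Perm Ω) => g i ≠ i)
  have hS : 0 < S.card := Finset.card_pos.mpr ⟨1, by simp [S, G.one_mem]⟩
  have h1 : ∀ i ∈ M, S.card ≤ 2 * (S.filter (fun g => g i ≠ i)).card := by
    intro i hi
    obtain ⟨h, hh, hhi⟩ := (Finset.mem_filter.mp hi).2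
    have hle : (S.filter (fun g => ¬ g i ≠ i)).card ≤ (S.filter (fun g => g i ≠ i)).card := by
      apply Finset.card_le_card_of_injOn (fun g => h * g)
      · intro g hg
        simp only [S, Finset.coe_filter, Finset.mem_filter, Finset.mem_univ, true_and,
          Set.mem_setOf_eq, not_not] at hg ⊢
        refine ⟨G.mul_mem hh hg.1, ?_⟩
        rw [Equiv.Perm.mul_apply, hg.2]
        exact hhi
      · intro a _ b _ hab
        exact mul_left_cancel hab
    have := Finset.card_filter_add_card_filter_not (s := S) (fun g => g i ≠ i)
    omega
  have h2 : ∀ g ∈ S, (M.filter (fun i => g i ≠ i)).card < k := by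
    intro g hg
    refine lt_of_le_of_lt ?_ (hcon g (Finset.mem_filter.mp hg).2)
    have : Nat.card {i : Ω | g i ≠ i} = (Finset.univ.filter (fun i => g i ≠ i)).card := by
      rw [Nat.card_eq_fintype_card]
      exact Fintype.card_subtype _
    rw [this]
    exact Finset.card_le_card (Finset.filter_subset_filter _ (Finset.subset_univ _))
  have h3 : ∑ g ∈ S, (M.filter (fun i => g i ≠ i)).card < ∑ g ∈ S, k :=
    Finset.sum_lt_sum_of_nonempty (Finset.card_pos.mp hS) h2
  have h4 := Finset.sum_le_sum h1
  rw [← Finset.mul_sum, hdc] at h4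
  simp only [Finset.sum_const, smul_eq_mul] at h3 h4
  have h5 := Nat.mul_le_mul_right S.card hM
  nlinarith
end

section
/- Let G ≤ Sym(Ω) act transitively on a finite set Ω with |Ω| = n ≥ 2 and let α ∈ Ω with stabilizer G_α. Then there exists τ ∈ G such that Σ_{g ∈ G_α} move(g ∘ τ) > (n − 1) · |G_α|; that is, some coset G_α τ of the point stabilizer has average number of moved points strictly greater than n − 1. -/
theorem exists_good_coset_aux {Ω : Type*} [Fintype Ω] (h : Equiv.Perm Ω) :
    Nat.card {j : Ω | h j ≠ j} + Nat.card {j : Ω | h j = j} = Fintype.card Ω := by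
  classical
  have := Set.ncard_add_ncard_compl {j : Ω | h j ≠ j}
  have e : {j : Ω | h j ≠ j}ᶜ = {j : Ω | h j = j} := by ext; simp
  rw [e] at this
  rw [Nat.card_eq_fintype_card.symm]
  exact this

/-- For a transitive group `G` on `n ≥ 2` points, some coset `G_α τ` of a
point stabilizer has total number of moved points exceeding `(n-1) * |G_α|`. -/
theorem exists_good_coset {Ω : Type*} [Fintype Ω]
    (G : Subgroup (Equiv.Perm Ω)) (hΩ : 2 ≤ Fintype.card Ω)
    (htrans : ∀ x y : Ω, ∃ g ∈ G, g x = y) (α : Ω)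
    [Fintype (MulAction.stabilizer G α)] :
    ∃ τ ∈ G,
      (Fintype.card Ω - 1) * Nat.card (MulAction.stabilizer G α) <
        ∑ g : MulAction.stabilizer G α,
          Nat.card {j : Ω | (((g : G) : Equiv.Perm Ω) * τ) j ≠ j} := by
  classical
  have : Fintype G := Fintype.ofFinite G
  by_contra! hcon
  let f : G → ℕ := fun h => Nat.card {j : Ω | (h : Equiv.Perm Ω) j = j}
  have hburn : ∑ h : G, f h = Fintype.card G := by
    have hb := MulAction.sum_card_fixedBy_eq_card_orbits_mul_card_group G Ω
    have : MulAction.IsPretransitive G Ω :=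
      ⟨fun x y => by obtain ⟨g, hg, h⟩ := htrans x y; exact ⟨⟨g, hg⟩, h⟩⟩
    have h1 : Fintype.card (Quotient (MulAction.orbitRel G Ω)) = 1 := by
      rw [Fintype.card_eq_one_iff_nonempty_unique]
      have : Subsingleton (Quotient (MulAction.orbitRel G Ω)) :=
        (MulAction.pretransitive_iff_subsingleton_quotient G Ω).1 inferInstance
      exact ⟨⟨⟨Quotient.mk _ α⟩, fun _ => Subsingleton.elim _ _⟩⟩
    rw [h1, one_mul] at hb
    rw [← hb]
    refine Finset.sum_congr rfl fun h _ => ?_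
    rw [← Nat.card_eq_fintype_card]
    rfl
  have hF : ∀ τ : G, Fintype.card (MulAction.stabilizer G α) ≤
      ∑ g : MulAction.stabilizer G α, f ((g : G) * τ) := by
    intro τ
    have h1 := hcon τ τ.2
    have h2 : ∑ g : MulAction.stabilizer G α,
          Nat.card {j : Ω | (((g : G) : Equiv.Perm Ω) * τ) j ≠ j}
        + ∑ g : MulAction.stabilizer G α, f ((g : G) * τ)
        = Fintype.card (MulAction.stabilizer G α) * Fintype.card Ω := by
      rw [← Finset.sum_add_distrib]
      refine (Finset.sum_congr rfl (g := fun _ => Fintype.card Ω)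
        (fun (g : MulAction.stabilizer G α) _ => exists_good_coset_aux (((g : G) : Equiv.Perm Ω) * (τ : Equiv.Perm Ω)))).trans ?_
      simp
    rw [Nat.card_eq_fintype_card] at h1
    obtain ⟨m, hm⟩ := Nat.exists_eq_add_of_le hΩ
    rw [hm] at h1 h2
    have : 2 + m - 1 = m + 1 := by omega
    rw [this] at h1
    nlinarith
  have h1 : Fintype.card (MulAction.stabilizer G α) <
      ∑ g : MulAction.stabilizer G α, f ((g : G) * 1) := by
    rw [Fintype.card_eq_sum_ones]
    refine Finset.sum_lt_sum (fun g _ => ?_) ⟨1, Finset.mem_univ _, ?_⟩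
    · have : (((g : G) * 1 : G) : Equiv.Perm Ω) α = α := by
        rw [mul_one]; exact g.2
      have : Nonempty {j : Ω | (((g : G) * 1 : G) : Equiv.Perm Ω) j = j} := ⟨⟨α, this⟩⟩
      exact Nat.card_pos
    · simp only [f]
      simp
      omega
  have h2 : ∑ τ : G, ∑ g : MulAction.stabilizer G α, f ((g : G) * τ)
      = Fintype.card (MulAction.stabilizer G α) * Fintype.card G := by
    rw [Finset.sum_comm]
    refine (Finset.sum_congr rfl (g := fun _ => Fintype.card G) (fun (g : MulAction.stabilizer G α) _ =>
      (Equiv.sum_comp (Equiv.mulLeft (g : G)) f).trans hburn)).trans ?_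
    simp
  have h3 := Finset.sum_lt_sum (fun τ _ => hF τ) ⟨1, Finset.mem_univ _, h1⟩
  rw [h2] at h3
  simp [mul_comm] at h3
end

section
/- Let G = ⟨g⟩ ≤ Sym(Ω) be a cyclic permutation group on a finite set Ω, where g has order N = p_1^{e_1} p_2^{e_2} ⋯ p_ℓ^{e_ℓ} for distinct primes p_1, …, p_ℓ (e_i ≥ 1). For each i, let g_i = g^{N / p_i^{e_i}} (an element of order p_i^{e_i}), and let S_i = {α ∈ Ω : the ⟨g_i⟩-orbit of α has size exactly p_i^{e_i}} (the points lying on a cycle of g_i of length p_i^{e_i}). Then a subset B ⊆ Ω is a base for G (i.e., the pointwise stabilizer of B in G is trivial) if and only if B ∩ S_i ≠ ∅ for every i ∈ {1, …, ℓ}. -/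
theorem aux_orbit {Ω : Type*} [Fintype Ω] (g : Equiv.Perm Ω) (p e : ℕ) (hp : p.Prime)
    (he : 1 ≤ e) (hd : p ^ e ∣ orderOf g) (α : Ω) :
    Nat.card (MulAction.orbit (Subgroup.zpowers (g ^ (orderOf g / p ^ e))) α) = p ^ e ↔
      ¬ (g ^ (orderOf g / p)) α = α := by
  classical
  obtain ⟨f, rfl⟩ : ∃ f, e = f + 1 := ⟨e - 1, by omega⟩
  obtain ⟨c, hc⟩ := hd
  have hppos : 0 < p := hp.pos
  have h1 : orderOf g / p ^ (f + 1) = c := by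
    rw [hc]; exact Nat.mul_div_cancel_left _ (by positivity)
  have h2 : orderOf g / p = c * p ^ f := by
    rw [hc, pow_succ]; apply Nat.div_eq_of_eq_mul_left hppos; ring
  rw [h1, h2, pow_mul]
  have : Fintype (MulAction.orbit (Subgroup.zpowers (g ^ c)) α) := Fintype.ofFinite _
  rw [Nat.card_eq_fintype_card, ← MulAction.minimalPeriod_eq_card]
  have key : ∀ n : ℕ, ((g ^ c) ^ n) α = α ↔
      Function.minimalPeriod (fun x => g ^ c • x) α ∣ n := fun n =>
    MulAction.pow_smul_eq_iff_minimalPeriod_dvd (a := g ^ c) (b := α) (n := n)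
  have hall : ((g ^ c) ^ (p ^ (f + 1))) α = α := by
    rw [← pow_mul, mul_comm, ← hc, pow_orderOf_eq_one]; rfl
  rw [key] at hall
  rw [key]
  constructor
  · intro h h'
    rw [h] at h'
    have := (Nat.pow_dvd_pow_iff_le_right hp.one_lt).1 h'
    omega
  · intro h
    exact Nat.eq_prime_pow_of_dvd_least_prime_pow hp h hall

/-- Base characterization for cyclic permutation groups: if `g` has order
`N = ∏ pᵢ^{eᵢ}` (distinct primes `pᵢ`), `gᵢ = g^(N / pᵢ^{eᵢ})` and
`Sᵢ` is the set of points lying on a cycle of `gᵢ` of length `pᵢ^{eᵢ}`,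
then `B ⊆ Ω` is a base for `⟨g⟩` iff `B` meets every `Sᵢ`. -/
theorem cyclic_base_iff_hitting {Ω : Type*} [Fintype Ω]
    (g : Equiv.Perm Ω) {ℓ : ℕ} (p e : Fin ℓ → ℕ)
    (hp : ∀ i, (p i).Prime) (hdist : Function.Injective p)
    (he : ∀ i, 1 ≤ e i)
    (hord : orderOf g = ∏ i, p i ^ e i) (B : Set Ω) :
    (∀ h ∈ Subgroup.zpowers g, (∀ b ∈ B, h b = b) → h = 1) ↔
      ∀ i, (B ∩ {α : Ω |
        Nat.card (MulAction.orbit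
          (Subgroup.zpowers (g ^ (orderOf g / p i ^ e i))) α) = p i ^ e i}).Nonempty := by
  have hd : ∀ i, p i ^ e i ∣ orderOf g := fun i => by
    rw [hord]; exact Finset.dvd_prod_of_mem _ (Finset.mem_univ i)
  have hN : 0 < orderOf g := orderOf_pos g
  have hpd : ∀ i, p i ∣ orderOf g := fun i =>
    (dvd_pow_self _ (by have := he i; omega)).trans (hd i)
  constructor
  · intro H i
    by_contra hne
    have h1 := H (g ^ (orderOf g / p i)) (Subgroup.npow_mem_zpowers g _) (by
      intro b hb
      by_contra hb'
      exact hne ⟨b, hb, (aux_orbit g (p i) (e i) (hp i) (he i) (hd i) b).2 hb'⟩)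
    have h2 := Nat.le_of_dvd (Nat.div_pos (Nat.le_of_dvd hN (hpd i)) (hp i).pos)
      (orderOf_dvd_of_pow_eq_one h1)
    have h3 := Nat.div_lt_self hN (hp i).one_lt
    omega
  · intro H h hh hfix
    obtain ⟨k, rfl⟩ := mem_powers_iff_mem_zpowers.2 hh
    simp only at hfix ⊢
    rw [← orderOf_dvd_iff_pow_eq_one]
    by_contra hk
    obtain ⟨m, hm⟩ := Nat.gcd_dvd_right k (orderOf g)
    have hm1 : m ≠ 1 := by
      rintro rfl
      apply hk
      rw [hm, mul_one]
      exact Nat.gcd_dvd_left _ _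
    obtain ⟨q, hq, t, rfl⟩ := Nat.exists_prime_and_dvd hm1
    have hqN : q ∣ ∏ i, p i ^ e i := by
      rw [← hord, hm]; exact Dvd.intro_left (k.gcd (orderOf g) * t) (by ring)
    obtain ⟨i, -, hi⟩ := (hq.prime.dvd_finset_prod_iff _).1 hqN
    have hqi : q = p i := (Nat.prime_dvd_prime_iff_eq hq (hp i)).1 (hq.dvd_of_dvd_pow hi)
    obtain ⟨b, hb, hb'⟩ := H i
    refine (aux_orbit g (p i) (e i) (hp i) (he i) (hd i) b).1 hb' ?_
    have key : ∀ n : ℕ, (g ^ n) b = b ↔ MulAction.period g b ∣ n := fun n =>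
      MulAction.pow_smul_eq_iff_period_dvd (m := g) (a := b) (n := n)
    have c1 := (key _).1 (hfix b hb)
    have c2 := (key (orderOf g)).1 (by rw [pow_orderOf_eq_one]; rfl)
    rw [key, ← hqi]
    have : orderOf g / q = k.gcd (orderOf g) * t := by
      apply Nat.div_eq_of_eq_mul_left hq.pos
      conv_lhs => rw [hm]
      ring
    rw [this]
    exact (Nat.dvd_gcd c1 c2).mul_right _
end
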